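/- Let m1, m2, m3, m4 > 0 and M = m1+m2+m3+m4. There is at most one r ∈ ℝ⁶ with all six coordinates positive satisfying I(r) = 1, F(r) = 0, H(r) = 0, the triangle inequalities r_ij + r_jk > r_ik for all triples of distinct indices, and for which there exist real numbers λ and σ with ∇U(r) + λ M ∇I(r) + σ ∇F(r) = 0. That is, for each choice of positive masses there is at most one (normalized, sequentially ordered) trapezoidal central configuration of four bodies. -/

import Mathlib

noncomputable section

/-- `F` as a function of the vector of mutual distances
`r = (r12, r13, r14, r23, r24, r34)` (indexed `0,…,5`). -/
def F (r : Fin 6 → ℝ) : ℝ :=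
  2 * r 0 * r 5 - (r 1) ^ 2 - (r 4) ^ 2 + (r 3) ^ 2 + (r 2) ^ 2

/-- The Cayley–Menger determinant of the mutual distances. -/
def H (r : Fin 6 → ℝ) : ℝ :=
  Matrix.det
    !![0, 1, 1, 1, 1;
       1, 0, (r 0) ^ 2, (r 1) ^ 2, (r 2) ^ 2;
       1, (r 0) ^ 2, 0, (r 3) ^ 2, (r 4) ^ 2;
       1, (r 1) ^ 2, (r 3) ^ 2, 0, (r 5) ^ 2;
       1, (r 2) ^ 2, (r 4) ^ 2, (r 5) ^ 2, 0]

/-- The Newtonian potential `U(r) = Σ_{i<j} m_i m_j / r_ij`. -/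
def U (m1 m2 m3 m4 : ℝ) (r : Fin 6 → ℝ) : ℝ :=
  m1 * m2 / r 0 + m1 * m3 / r 1 + m1 * m4 / r 2 +
    m2 * m3 / r 3 + m2 * m4 / r 4 + m3 * m4 / r 5

/-- The moment of inertia `I(r) = (1/(2M)) Σ_{i<j} m_i m_j r_ij²`. -/
def Iner (m1 m2 m3 m4 : ℝ) (r : Fin 6 → ℝ) : ℝ :=
  (1 / (2 * (m1 + m2 + m3 + m4))) *
    (m1 * m2 * (r 0) ^ 2 + m1 * m3 * (r 1) ^ 2 + m1 * m4 * (r 2) ^ 2 +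
      m2 * m3 * (r 3) ^ 2 + m2 * m4 * (r 4) ^ 2 + m3 * m4 * (r 5) ^ 2)

/-- The symmetric matrix of mutual distances `d i j = r_{i+1, j+1}`. -/
def dmat (r : Fin 6 → ℝ) : Matrix (Fin 4) (Fin 4) ℝ :=
  !![0,   r 0, r 1, r 2;
     r 0, 0,   r 3, r 4;
     r 1, r 3, 0,   r 5;
     r 2, r 4, r 5, 0]

/-- A normalized sequentially ordered trapezoidal central configuration:
positive mutual distances satisfying `I = 1`, `F = 0`, `H = 0`, all triangle
inequalities, and the Lagrange condition `∇U + λM∇I + σ∇F = 0`. -/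
def IsTrapezoidalCC (m1 m2 m3 m4 : ℝ) (r : Fin 6 → ℝ) : Prop :=
  (∀ i, 0 < r i) ∧ Iner m1 m2 m3 m4 r = 1 ∧ F r = 0 ∧ H r = 0 ∧
    (∀ i j k : Fin 4, i ≠ j → j ≠ k → i ≠ k →
      dmat r i j + dmat r j k > dmat r i k) ∧
    ∃ lam sigma : ℝ,
      fderiv ℝ (U m1 m2 m3 m4) r
          + (lam * (m1 + m2 + m3 + m4)) • fderiv ℝ (Iner m1 m2 m3 m4) r
          + sigma • fderiv ℝ F r = 0

/-- The stationarity equations, cleared of denominators, in the order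
`(r12, r13, r14, r23, r24, r34)`; here `s = 2σ`. -/
def Stationary (m1 m2 m3 m4 lam s : ℝ) (r : Fin 6 → ℝ) : Prop :=
  m1 * m2 * (lam * r 0 ^ 3 - 1) = -(s * r 0 ^ 2 * r 5) ∧
  m1 * m3 * (lam * r 1 ^ 3 - 1) = s * r 1 ^ 3 ∧
  m1 * m4 * (lam * r 2 ^ 3 - 1) = -s * r 2 ^ 3 ∧
  m2 * m3 * (lam * r 3 ^ 3 - 1) = -s * r 3 ^ 3 ∧
  m2 * m4 * (lam * r 4 ^ 3 - 1) = s * r 4 ^ 3 ∧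
  m3 * m4 * (lam * r 5 ^ 3 - 1) = -(s * r 5 ^ 2 * r 0)

lemma hasFDerivAt_const_div_apply (c : ℝ) (r : Fin 6 → ℝ) (i : Fin 6) (hi : r i ≠ 0) :
    HasFDerivAt (fun x : Fin 6 → ℝ => c / x i)
      ((-c / r i ^ 2) • ContinuousLinearMap.proj (R := ℝ) (φ := fun _ : Fin 6 => ℝ) i) r := by
  have h : HasDerivAt (fun y : ℝ => c / y) (-c / r i ^ 2) (r i) := by
    simpa [div_eq_mul_inv, neg_mul] using (hasDerivAt_inv hi).const_mul c
  exact HasDerivAt.comp_hasFDerivAt (f := fun x : Fin 6 → ℝ => x i) r h (hasFDerivAt_apply i r)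

lemma hasFDerivAt_const_mul_apply_sq (c : ℝ) (r : Fin 6 → ℝ) (i : Fin 6) :
    HasFDerivAt (fun x : Fin 6 → ℝ => c * x i ^ 2)
      ((c * (2 * r i)) • ContinuousLinearMap.proj (R := ℝ) (φ := fun _ : Fin 6 => ℝ) i) r := by
  have h : HasDerivAt (fun y : ℝ => c * y ^ 2) (c * (2 * r i)) (r i) := by
    simpa using (hasDerivAt_pow 2 (r i)).const_mul c
  exact HasDerivAt.comp_hasFDerivAt (f := fun x : Fin 6 → ℝ => x i) r h (hasFDerivAt_apply i r)

lemma fderiv_U_apply (m1 m2 m3 m4 : ℝ) (r v : Fin 6 → ℝ) (hr : ∀ i, 0 < r i) :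
    fderiv ℝ (U m1 m2 m3 m4) r v =
      -(m1 * m2) / r 0 ^ 2 * v 0 + -(m1 * m3) / r 1 ^ 2 * v 1 + -(m1 * m4) / r 2 ^ 2 * v 2 +
      -(m2 * m3) / r 3 ^ 2 * v 3 + -(m2 * m4) / r 4 ^ 2 * v 4 + -(m3 * m4) / r 5 ^ 2 * v 5 := by
  have h := fun (c : ℝ) (i : Fin 6) => hasFDerivAt_const_div_apply c r i (hr i).ne'
  have hU : HasFDerivAt (U m1 m2 m3 m4) _ r :=
    (((((h (m1 * m2) 0).add (h (m1 * m3) 1)).add (h (m1 * m4) 2)).add (h (m2 * m3) 3)).add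
      (h (m2 * m4) 4)).add (h (m3 * m4) 5)
  rw [hU.fderiv]
  simp

lemma fderiv_Iner_apply (m1 m2 m3 m4 : ℝ) (r v : Fin 6 → ℝ) :
    fderiv ℝ (Iner m1 m2 m3 m4) r v =
      (1 / (2 * (m1 + m2 + m3 + m4))) *
      (m1 * m2 * (2 * r 0) * v 0 + m1 * m3 * (2 * r 1) * v 1 + m1 * m4 * (2 * r 2) * v 2 +
      m2 * m3 * (2 * r 3) * v 3 + m2 * m4 * (2 * r 4) * v 4 + m3 * m4 * (2 * r 5) * v 5) := by
  have h := fun (c : ℝ) (i : Fin 6) => hasFDerivAt_const_mul_apply_sq c r i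
  have hI : HasFDerivAt (Iner m1 m2 m3 m4) _ r :=
    ((((((h (m1 * m2) 0).add (h (m1 * m3) 1)).add (h (m1 * m4) 2)).add (h (m2 * m3) 3)).add
      (h (m2 * m4) 4)).add (h (m3 * m4) 5)).const_mul (1 / (2 * (m1 + m2 + m3 + m4)))
  rw [hI.fderiv]
  simp
  ring

lemma fderiv_F_apply (r v : Fin 6 → ℝ) :
    fderiv ℝ F r v =
      2 * r 5 * v 0 - 2 * r 1 * v 1 + 2 * r 2 * v 2 + 2 * r 3 * v 3 - 2 * r 4 * v 4 +
      2 * r 0 * v 5 := by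
  have p := fun i : Fin 6 => hasFDerivAt_apply (𝕜 := ℝ) (F' := fun _ : Fin 6 => ℝ) i r
  have hF : HasFDerivAt F _ r :=
    ((((((p 0).const_mul 2).mul (p 5)).sub ((p 1).pow 2)).sub ((p 4).pow 2)).add
      ((p 3).pow 2)).add ((p 2).pow 2)
  rw [hF.fderiv]
  simp
  ring

lemma stationary_of_lagrange {m1 m2 m3 m4 lam sigma : ℝ} {r : Fin 6 → ℝ}
    (hM : m1 + m2 + m3 + m4 ≠ 0) (hr : ∀ i, 0 < r i)
    (h : fderiv ℝ (U m1 m2 m3 m4) r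
          + (lam * (m1 + m2 + m3 + m4)) • fderiv ℝ (Iner m1 m2 m3 m4) r
          + sigma • fderiv ℝ F r = 0) :
    Stationary m1 m2 m3 m4 lam (2 * sigma) r := by
  have key : ∀ v : Fin 6 → ℝ, fderiv ℝ (U m1 m2 m3 m4) r v
      + (lam * (m1 + m2 + m3 + m4)) * fderiv ℝ (Iner m1 m2 m3 m4) r v
      + sigma * fderiv ℝ F r v = 0 := fun v => by
    simpa using DFunLike.congr_fun h v
  simp only [fderiv_U_apply m1 m2 m3 m4 r _ hr, fderiv_Iner_apply, fderiv_F_apply] at key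
  have hne := fun i => (hr i).ne'
  have h0 := hne 0
  have h1 := hne 1
  have h2 := hne 2
  have h3 := hne 3
  have h4 := hne 4
  have h5 := hne 5
  refine ⟨?_, ?_, ?_, ?_, ?_, ?_⟩
  · have k := key (Pi.single 0 1)
    simp at k
    field_simp at k
    linear_combination k
  · have k := key (Pi.single 1 1)
    simp at k
    field_simp at k
    linear_combination k
  · have k := key (Pi.single 2 1)
    simp at k
    field_simp at k
    linear_combination k
  · have k := key (Pi.single 3 1)
    simp at k
    field_simp at k
    linear_combination k
  · have k := key (Pi.single 4 1)
    simp at k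
    field_simp at k
    linear_combination k
  · have k := key (Pi.single 5 1)
    simp at k
    field_simp at k
    linear_combination k

/-- Euler's identity forces the multiplier of the moment of inertia to be positive. -/
lemma Stationary.lam_pos {m1 m2 m3 m4 lam s : ℝ} {r : Fin 6 → ℝ}
    (hm1 : 0 < m1) (hm2 : 0 < m2) (hm3 : 0 < m3) (hm4 : 0 < m4) (hr : ∀ i, 0 < r i)
    (hF : F r = 0) (h : Stationary m1 m2 m3 m4 lam s r) : 0 < lam := by
  obtain ⟨e0, e1, e2, e3, e4, e5⟩ := h
  have h0 := hr 0
  have h1 := hr 1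
  have h2 := hr 2
  have h3 := hr 3
  have h4 := hr 4
  have h5 := hr 5
  have hU : 0 < U m1 m2 m3 m4 r := by unfold U; positivity
  have hI : 0 < m1 * m2 * (r 0) ^ 2 + m1 * m3 * (r 1) ^ 2 + m1 * m4 * (r 2) ^ 2 +
      m2 * m3 * (r 3) ^ 2 + m2 * m4 * (r 4) ^ 2 + m3 * m4 * (r 5) ^ 2 := by positivity
  have g0 : m1 * m2 / r 0 = lam * (m1 * m2 * r 0 ^ 2) + s * (r 0 * r 5) := by
    field_simp; linear_combination -e0
  have g1 : m1 * m3 / r 1 = lam * (m1 * m3 * r 1 ^ 2) - s * r 1 ^ 2 := by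
    field_simp; linear_combination -e1
  have g2 : m1 * m4 / r 2 = lam * (m1 * m4 * r 2 ^ 2) + s * r 2 ^ 2 := by
    field_simp; linear_combination -e2
  have g3 : m2 * m3 / r 3 = lam * (m2 * m3 * r 3 ^ 2) + s * r 3 ^ 2 := by
    field_simp; linear_combination -e3
  have g4 : m2 * m4 / r 4 = lam * (m2 * m4 * r 4 ^ 2) - s * r 4 ^ 2 := by
    field_simp; linear_combination -e4
  have g5 : m3 * m4 / r 5 = lam * (m3 * m4 * r 5 ^ 2) + s * (r 0 * r 5) := by
    field_simp; linear_combination -e5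
  unfold U at hU
  unfold F at hF
  refine pos_of_mul_pos_left (b := m1 * m2 * (r 0) ^ 2 + m1 * m3 * (r 1) ^ 2 +
    m1 * m4 * (r 2) ^ 2 + m2 * m3 * (r 3) ^ 2 + m2 * m4 * (r 4) ^ 2 +
    m3 * m4 * (r 5) ^ 2) ?_ hI.le
  linear_combination hU + g0 + g1 + g2 + g3 + g4 + g5 + s * hF

/-- A solution of `κ (x³ - 1) = s x³` is monotone in `s`. -/
lemma le_of_cube_equation {κ s s' x y : ℝ} (hκ : 0 < κ) (hy : 0 < y)
    (ex : κ * (x ^ 3 - 1) = s * x ^ 3) (ey : κ * (y ^ 3 - 1) = s' * y ^ 3) (hs : s ≤ s') :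
    x ≤ y := by
  by_contra! hlt
  have hc : y ^ 3 < x ^ 3 := pow_lt_pow_left₀ hlt hy.le (by norm_num)
  have hy3 : 0 < y ^ 3 := by positivity
  have hpos : 0 < κ - s' := pos_of_mul_pos_left (b := y ^ 3) (by linarith) hy3.le
  nlinarith

/-- A positive solution of `κ (x³ - 1) = -w x` is antitone in `w ≥ 0`. -/
lemma le_of_depressed_cubic {κ w w' x y : ℝ} (hκ : 0 < κ) (hx : 0 < x) (hw : 0 ≤ w)
    (ex : κ * (x ^ 3 - 1) = -(w * x)) (ey : κ * (y ^ 3 - 1) = -(w' * y)) (hww : w ≤ w') :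
    y ≤ x := by
  by_contra! hlt
  have hc : x ^ 3 < y ^ 3 := pow_lt_pow_left₀ hlt hx.le (by norm_num)
  nlinarith [mul_le_mul hww hlt.le hx.le (hw.trans hww), mul_pos hκ (sub_pos.2 hc)]

/-- In a normalized stationary configuration with `F = 0`, the diagonals are not all shorter than
the sides, which fixes the sign of the multiplier. -/
lemma Stationary.nonneg {m1 m2 m3 m4 s : ℝ} {r : Fin 6 → ℝ}
    (hm1 : 0 < m1) (hm2 : 0 < m2) (hm3 : 0 < m3) (hm4 : 0 < m4) (hr : ∀ i, 0 < r i)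
    (hF : F r = 0) (h : Stationary m1 m2 m3 m4 1 s r) : 0 ≤ s := by
  by_contra! hs
  obtain ⟨e0, e1, e2, e3, e4, e5⟩ := h
  simp only [one_mul] at e0 e1 e2 e3 e4 e5
  have h0 := hr 0
  have h1 := hr 1
  have h2 := hr 2
  have h3 := hr 3
  have h4 := hr 4
  have h5 := hr 5
  have diag {κ x : ℝ} (hκ : 0 < κ) (ex : κ * (x ^ 3 - 1) = s * x ^ 3) : x ≤ 1 :=
    le_of_cube_equation (s' := 0) hκ one_pos ex (by ring) hs.le
  have leg {κ x : ℝ} (hκ : 0 < κ) (hx : 0 < x) (ex : κ * (x ^ 3 - 1) = -s * x ^ 3) : 1 ≤ x :=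
    le_of_cube_equation (s := 0) hκ hx (by ring) ex (by linarith)
  have base {κ x y : ℝ} (hκ : 0 < κ) (hx : 0 < x) (hy : 0 < y)
      (ex : κ * (x ^ 3 - 1) = -(s * x ^ 2 * y)) : 1 ≤ x := by
    have hp : 0 < x ^ 2 * y := by positivity
    have : 0 ≤ x ^ 3 - 1 := nonneg_of_mul_nonneg_right (a := κ) (by nlinarith) hκ
    by_contra! hlt
    linarith [pow_lt_one₀ hx.le hlt (show 3 ≠ 0 by norm_num)]
  have b0 := base (mul_pos hm1 hm2) h0 h5 e0
  have b5 := base (mul_pos hm3 hm4) h5 h0 e5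
  have b1 := diag (mul_pos hm1 hm3) e1
  have b4 := diag (mul_pos hm2 hm4) e4
  have b2 := leg (mul_pos hm1 hm4) h2 e2
  have b3 := leg (mul_pos hm2 hm3) h3 e3
  unfold F at hF
  nlinarith [mul_le_mul b0 b5 zero_le_one h0.le]

/-- Stationary configurations normalized by `λ = 1` with `F = 0` are unique. -/
lemma Stationary.eq_of_le {m1 m2 m3 m4 s s' : ℝ} {r r' : Fin 6 → ℝ}
    (hm1 : 0 < m1) (hm2 : 0 < m2) (hm3 : 0 < m3) (hm4 : 0 < m4)
    (hr : ∀ i, 0 < r i) (hr' : ∀ i, 0 < r' i) (hF : F r = 0) (hF' : F r' = 0)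
    (h : Stationary m1 m2 m3 m4 1 s r) (h' : Stationary m1 m2 m3 m4 1 s' r') (hs : s ≤ s') :
    r = r' := by
  have hs0 := h.nonneg hm1 hm2 hm3 hm4 hr hF
  obtain ⟨e0, e1, e2, e3, e4, e5⟩ := h
  obtain ⟨e0', e1', e2', e3', e4', e5'⟩ := h'
  simp only [one_mul] at e0 e1 e2 e3 e4 e5 e0' e1' e2' e3' e4' e5'
  have c1 := le_of_cube_equation (mul_pos hm1 hm3) (hr' 1) e1 e1' hs
  have c4 := le_of_cube_equation (mul_pos hm2 hm4) (hr' 4) e4 e4' hs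
  have c2 := le_of_cube_equation (mul_pos hm1 hm4) (hr 2) e2' e2 (neg_le_neg hs)
  have c3 := le_of_cube_equation (mul_pos hm2 hm3) (hr 3) e3' e3 (neg_le_neg hs)
  have q1 := pow_le_pow_left₀ (hr 1).le c1 2
  have q4 := pow_le_pow_left₀ (hr 4).le c4 2
  have q2 := pow_le_pow_left₀ (hr' 2).le c2 2
  have q3 := pow_le_pow_left₀ (hr' 3).le c3 2
  have hp : 0 < r 0 * r 5 := mul_pos (hr 0) (hr 5)
  unfold F at hF hF'
  have hpp : r 0 * r 5 ≤ r' 0 * r' 5 := by linarith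
  have hw : s * (r 0 * r 5) ≤ s' * (r' 0 * r' 5) :=
    mul_le_mul hs hpp hp.le (hs0.trans hs)
  have hw0 : 0 ≤ s * (r 0 * r 5) := mul_nonneg hs0 hp.le
  have c0 : r' 0 ≤ r 0 := le_of_depressed_cubic (mul_pos hm1 hm2) (hr 0) hw0
    (by linear_combination e0) (by linear_combination e0') hw
  have c5 : r' 5 ≤ r 5 := le_of_depressed_cubic (mul_pos hm3 hm4) (hr 5) hw0
    (by linear_combination e5) (by linear_combination e5') hw
  have d0 : r 0 = r' 0 := le_antisymm
    (le_of_not_gt fun hlt => (mul_lt_mul hlt c5 (hr' 5) (hr 0).le).not_ge hpp) c0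
  have d5 : r 5 = r' 5 := le_antisymm
    (le_of_not_gt fun hlt => (mul_lt_mul' c0 hlt (hr' 5).le (hr 0)).not_ge hpp) c5
  rw [d0, d5] at hF
  have sq_inj (i : Fin 6) (hi : r i ^ 2 = r' i ^ 2) : r i = r' i :=
    (pow_left_inj₀ (hr i).le (hr' i).le two_ne_zero).1 hi
  funext i
  fin_cases i
  · exact d0
  · exact sq_inj 1 (by linarith)
  · exact sq_inj 2 (by linarith)
  · exact sq_inj 3 (by linarith)
  · exact sq_inj 4 (by linarith)
  · exact d5

/-- Rescaling lengths by the cube root `t` of `λ` normalizes `λ` to `1`. -/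
lemma Stationary.smul {m1 m2 m3 m4 t s : ℝ} {r : Fin 6 → ℝ} (ht : t ≠ 0)
    (h : Stationary m1 m2 m3 m4 (t ^ 3) s r) :
    Stationary m1 m2 m3 m4 1 (s / t ^ 3) (t • r) := by
  obtain ⟨e0, e1, e2, e3, e4, e5⟩ := h
  refine ⟨?_, ?_, ?_, ?_, ?_, ?_⟩ <;> simp only [Pi.smul_apply, smul_eq_mul] <;> field_simp
  · linear_combination e0
  · linear_combination e1
  · linear_combination e2
  · linear_combination e3
  · linear_combination e4
  · linear_combination e5

lemma F_smul (t : ℝ) (r : Fin 6 → ℝ) : F (t • r) = t ^ 2 * F r := by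
  simp only [F, Pi.smul_apply, smul_eq_mul]
  ring

lemma Iner_smul (m1 m2 m3 m4 t : ℝ) (r : Fin 6 → ℝ) :
    Iner m1 m2 m3 m4 (t • r) = t ^ 2 * Iner m1 m2 m3 m4 r := by
  simp only [Iner, Pi.smul_apply, smul_eq_mul]
  ring

lemma IsTrapezoidalCC.exists_stationary {m1 m2 m3 m4 : ℝ} {r : Fin 6 → ℝ}
    (hm1 : 0 < m1) (hm2 : 0 < m2) (hm3 : 0 < m3) (hm4 : 0 < m4)
    (h : IsTrapezoidalCC m1 m2 m3 m4 r) :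
    ∃ t s : ℝ, 0 < t ∧ (∀ i, 0 < (t • r) i) ∧ F (t • r) = 0 ∧
      Stationary m1 m2 m3 m4 1 s (t • r) := by
  obtain ⟨hr, -, hF, -, -, lam, sigma, hl⟩ := h
  have hst := stationary_of_lagrange (by positivity) hr hl
  have hlam := hst.lam_pos hm1 hm2 hm3 hm4 hr hF
  obtain ⟨t, ht, rfl⟩ : ∃ t : ℝ, 0 < t ∧ t ^ 3 = lam :=
    ⟨lam ^ ((3 : ℕ) : ℝ)⁻¹, Real.rpow_pos_of_pos hlam _,
      Real.rpow_inv_natCast_pow hlam.le (by norm_num)⟩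
  exact ⟨t, _, ht, fun i => mul_pos ht (hr i), by rw [F_smul, hF, mul_zero], hst.smul ht.ne'⟩

/-- For each choice of positive masses there is at most one normalized,
sequentially ordered trapezoidal central configuration of four bodies. -/
theorem trapezoidal_cc_unique (m1 m2 m3 m4 : ℝ) (hm1 : 0 < m1) (hm2 : 0 < m2)
    (hm3 : 0 < m3) (hm4 : 0 < m4) (r r' : Fin 6 → ℝ)
    (h : IsTrapezoidalCC m1 m2 m3 m4 r) (h' : IsTrapezoidalCC m1 m2 m3 m4 r') :
    r = r' := by
  obtain ⟨t, s, ht, hp, hF, hst⟩ := h.exists_stationary hm1 hm2 hm3 hm4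
  obtain ⟨t', s', ht', hp', hF', hst'⟩ := h'.exists_stationary hm1 hm2 hm3 hm4
  have heq : t • r = t' • r' := by
    rcases le_total s s' with hs | hs
    · exact hst.eq_of_le hm1 hm2 hm3 hm4 hp hp' hF hF' hst' hs
    · exact (hst'.eq_of_le hm1 hm2 hm3 hm4 hp' hp hF' hF hst hs).symm
  have hI := congrArg (Iner m1 m2 m3 m4) heq
  rw [Iner_smul, Iner_smul, h.2.1, h'.2.1, mul_one, mul_one] at hI
  obtain rfl : t = t' := (pow_left_inj₀ ht.le ht'.le two_ne_zero).1 hI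
  exact smul_right_injective _ ht.ne' heq
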